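/- Let G be a finite graph with no isolated vertices and no false twins (so that G admits an open locating-dominating code). Then γ^OLD(G) ≤ 2·γ^LD(G). -/

import Mathlib

open SimpleGraph

variable {V : Type*}

/-- The closed neighborhood `N[u]` of a vertex `u`. -/
def closedNbhd (G : SimpleGraph V) (u : V) : Set V := insert u (G.neighborSet u)

/-- `G` is identifiable: no two distinct vertices are true twins
(i.e. have the same closed neighborhood). -/
def Identifiable (G : SimpleGraph V) : Prop :=
  ∀ u v : V, u ≠ v → closedNbhd G u ≠ closedNbhd G v

/-- `G` has no false twins: no two distinct vertices have the same open neighborhood. -/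
def HasNoFalseTwins (G : SimpleGraph V) : Prop :=
  ∀ u v : V, u ≠ v → G.neighborSet u ≠ G.neighborSet v

/-- `C` is an identifying code of `G`. -/
def IsIdCode (G : SimpleGraph V) (C : Set V) : Prop :=
  (∀ u : V, (closedNbhd G u ∩ C).Nonempty) ∧
  ∀ u v : V, u ≠ v → closedNbhd G u ∩ C ≠ closedNbhd G v ∩ C

/-- `C` is a locating-dominating code of `G`. -/
def IsLDCode (G : SimpleGraph V) (C : Set V) : Prop :=
  (∀ u : V, (closedNbhd G u ∩ C).Nonempty) ∧
  ∀ u v : V, u ∉ C → v ∉ C → u ≠ v → G.neighborSet u ∩ C ≠ G.neighborSet v ∩ C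

/-- `C` is an open locating-dominating code of `G`. -/
def IsOLDCode (G : SimpleGraph V) (C : Set V) : Prop :=
  (∀ u : V, (G.neighborSet u ∩ C).Nonempty) ∧
  ∀ u v : V, u ≠ v → G.neighborSet u ∩ C ≠ G.neighborSet v ∩ C

/-- The identifying code number `γ^ID(G)`. -/
noncomputable def gammaID (G : SimpleGraph V) : ℕ :=
  sInf {n : ℕ | ∃ C : Set V, IsIdCode G C ∧ C.ncard = n}

/-- The locating-dominating number `γ^LD(G)`. -/
noncomputable def gammaLD (G : SimpleGraph V) : ℕ :=
  sInf {n : ℕ | ∃ C : Set V, IsLDCode G C ∧ C.ncard = n}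

/-- The open locating-dominating number `γ^OLD(G)`. -/
noncomputable def gammaOLD (G : SimpleGraph V) : ℕ :=
  sInf {n : ℕ | ∃ C : Set V, IsOLDCode G C ∧ C.ncard = n}

/-- `G` contains an induced cycle of length `n`. -/
def HasInducedCycle (G : SimpleGraph V) (n : ℕ) : Prop :=
  ∃ f : ZMod n → V, Function.Injective f ∧
    ∀ i j : ZMod n, G.Adj (f i) (f j) ↔ (j = i + 1 ∨ i = j + 1)

/-- `G` contains an induced diamond (`K₄` minus an edge). -/
def HasInducedDiamond (G : SimpleGraph V) : Prop :=
  ∃ a b c d : V, a ≠ b ∧ a ≠ c ∧ a ≠ d ∧ b ≠ c ∧ b ≠ d ∧ c ≠ d ∧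
    G.Adj a b ∧ G.Adj a c ∧ G.Adj b c ∧ G.Adj a d ∧ G.Adj b d ∧ ¬ G.Adj c d

/-- A block graph is a chordal (no induced cycle of length at least 4),
diamond-free graph. -/
def IsBlockGraph (G : SimpleGraph V) : Prop :=
  (∀ n : ℕ, 4 ≤ n → ¬ HasInducedCycle G n) ∧ ¬ HasInducedDiamond G

/-- `n_Q(G)`: the number of maximal cliques of `G`. -/
noncomputable def nQ (G : SimpleGraph V) : ℕ :=
  {s : Set V | G.IsClique s ∧ ∀ t : Set V, G.IsClique t → s ⊆ t → s = t}.ncard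

/-!
Both kinds of code are conditions on traces.  When there are no isolated vertices and no false
twins, `D` is an OLD-code as soon as `· ∩ D` is injective on `∅` together with all open
neighborhoods (separation from `∅` is domination).  An LD-code `C` makes `· ∩ C` injective on `∅`
together with the neighborhoods of the vertices outside `C`.  As in Bondy's theorem on induced
subsets, each of the at most `|C|` remaining neighborhoods can be separated from the others at the
cost of one additional vertex.
-/

section Separates

variable {A B D E : Set V} {𝓐 : Set (Set V)}

lemma inter_eq_inter_of_subset (hDE : D ⊆ E) (h : A ∩ E = B ∩ E) : A ∩ D = B ∩ D := by
  rw [← Set.inter_eq_self_of_subset_right hDE, ← Set.inter_assoc, h, Set.inter_assoc]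

/-- `D` separates the family `𝓐` if distinct members of `𝓐` have distinct traces on `D`.  This is
the common form of the location and domination conditions on codes. -/
def Separates (D : Set V) (𝓐 : Set (Set V)) : Prop := 𝓐.InjOn (· ∩ D)

lemma separates_univ (𝓐 : Set (Set V)) : Separates Set.univ 𝓐 := by
  simp [Separates, Set.InjOn]

lemma Separates.mono_left (h : Separates D 𝓐) (hDE : D ⊆ E) : Separates E 𝓐 := by
  intro A hA B hB htrace
  exact h hA hB (inter_eq_inter_of_subset hDE htrace)

lemma separates_insert :
    Separates D (insert A 𝓐) ↔ Separates D 𝓐 ∧ ∀ B ∈ 𝓐, A ∩ D = B ∩ D → A = B := by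
  simp only [Separates, Set.InjOn, Set.forall_mem_insert]
  grind

lemma Separates.exists_encard_le_one_insert (h : Separates D 𝓐) (A : Set V) :
    ∃ T : Set V, T.encard ≤ 1 ∧ Separates (D ∪ T) (insert A 𝓐) := by
  by_cases hA : ∀ B ∈ 𝓐, A ∩ D = B ∩ D → A = B
  · exact ⟨∅, by simp, by simpa using separates_insert.2 ⟨h, hA⟩⟩
  -- Since `D` separates `𝓐`, this `B` is the only member of `𝓐` with the same trace as `A`.
  push Not at hA
  obtain ⟨B, hB, hAB, hne⟩ := hA
  obtain ⟨w, hw⟩ : (symmDiff A B).Nonempty := Set.symmDiff_nonempty.2 hne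
  refine ⟨{w}, by simp, separates_insert.2 ⟨h.mono_left Set.subset_union_left, ?_⟩⟩
  intro B' hB' htrace
  have htraceD : A ∩ D = B' ∩ D := inter_eq_inter_of_subset Set.subset_union_left htrace
  obtain rfl : B = B' := h hB hB' (hAB.symm.trans htraceD)
  have hw_iff : w ∈ A ↔ w ∈ B := by simpa using Set.ext_iff.1 htrace w
  exact absurd hw (by simp [Set.mem_symmDiff, hw_iff])

theorem Separates.exists_encard_le_union (h : Separates D 𝓐) (𝓢 : Set (Set V)) :
    ∃ T : Set V, T.encard ≤ 𝓢.encard ∧ Separates (D ∪ T) (𝓢 ∪ 𝓐) := by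
  rcases 𝓢.finite_or_infinite with hfin | hinf
  · induction 𝓢, hfin using Set.Finite.induction_on with
    | empty => exact ⟨∅, by simp, by simpa using h⟩
    | @insert A 𝓢 hA _ ih =>
      obtain ⟨T, hT, hsep⟩ := ih
      obtain ⟨T', hT', hsep'⟩ := hsep.exists_encard_le_one_insert A
      refine ⟨T ∪ T', ?_, by rwa [← Set.union_assoc, Set.insert_union]⟩
      calc (T ∪ T').encard ≤ T.encard + T'.encard := Set.encard_union_le T T'
        _ ≤ 𝓢.encard + 1 := add_le_add hT hT'
        _ = (insert A 𝓢).encard := (Set.encard_insert_of_notMem hA).symm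
  · exact ⟨Set.univ, by simp [hinf.encard_eq], by simpa using separates_univ _⟩

end Separates

section Codes

variable {G : SimpleGraph V} {C : Set V}

lemma isLDCode_univ (G : SimpleGraph V) : IsLDCode G Set.univ :=
  ⟨fun u => ⟨u, Set.mem_insert u _, Set.mem_univ u⟩, fun u _ hu => absurd (Set.mem_univ u) hu⟩

lemma exists_isLDCode_ncard_eq_gammaLD (G : SimpleGraph V) :
    ∃ C : Set V, IsLDCode G C ∧ C.ncard = gammaLD G :=
  Nat.sInf_mem (s := {n | ∃ C : Set V, IsLDCode G C ∧ C.ncard = n})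
    ⟨_, Set.univ, isLDCode_univ G, rfl⟩

lemma IsOLDCode.gammaOLD_le_ncard (hC : IsOLDCode G C) : gammaOLD G ≤ C.ncard :=
  Nat.sInf_le ⟨C, hC, rfl⟩

lemma IsLDCode.neighborSet_inter_nonempty (hC : IsLDCode G C) {u : V} (hu : u ∉ C) :
    (G.neighborSet u ∩ C).Nonempty := by
  obtain ⟨w, rfl | hw, hwC⟩ := hC.1 u
  · exact absurd hwC hu
  · exact ⟨w, hw, hwC⟩

lemma IsLDCode.separates (hC : IsLDCode G C) :
    Separates C (insert ∅ (G.neighborSet '' Cᶜ)) := by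
  refine separates_insert.2 ⟨?_, ?_⟩
  · rintro _ ⟨u, hu, rfl⟩ _ ⟨v, hv, rfl⟩ htrace
    by_contra hne
    exact hC.2 u v hu hv (ne_of_apply_ne _ hne) htrace
  · rintro _ ⟨u, hu, rfl⟩ htrace
    rw [Set.empty_inter] at htrace
    exact absurd htrace.symm (hC.neighborSet_inter_nonempty hu).ne_empty

lemma Separates.isOLDCode (h : Separates C (insert ∅ (Set.range G.neighborSet)))
    (hiso : ∀ v : V, (G.neighborSet v).Nonempty) (hft : HasNoFalseTwins G) : IsOLDCode G C := by
  obtain ⟨hloc, hdom⟩ := separates_insert.1 h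
  refine ⟨fun u => ?_, fun u v huv htrace => ?_⟩
  · rw [Set.nonempty_iff_ne_empty]
    intro hempty
    exact (hiso u).ne_empty (hdom _ ⟨u, rfl⟩ (by rw [hempty, Set.empty_inter])).symm
  · exact hft u v huv (hloc ⟨u, rfl⟩ ⟨v, rfl⟩ htrace)

theorem IsLDCode.exists_isOLDCode_superset (hC : IsLDCode G C)
    (hiso : ∀ v : V, (G.neighborSet v).Nonempty) (hft : HasNoFalseTwins G) :
    ∃ D : Set V, C ⊆ D ∧ IsOLDCode G D ∧ D.encard ≤ 2 * C.encard := by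
  obtain ⟨T, hT, hsep⟩ := hC.separates.exists_encard_le_union (G.neighborSet '' C)
  refine ⟨C ∪ T, Set.subset_union_left, Separates.isOLDCode ?_ hiso hft, ?_⟩
  · rwa [Set.union_insert, ← Set.image_union, Set.union_compl_self, Set.image_univ] at hsep
  · calc (C ∪ T).encard ≤ C.encard + T.encard := Set.encard_union_le C T
      _ ≤ C.encard + C.encard := add_le_add_right (hT.trans (Set.encard_image_le _ _)) _
      _ = 2 * C.encard := (two_mul _).symm

end Codes

/-- For every finite graph `G` with no isolated vertices and no false
twins, `γ^OLD(G) ≤ 2 γ^LD(G)`. -/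
theorem old_le_two_ld {V : Type*} [Fintype V] (G : SimpleGraph V)
    (hiso : ∀ v : V, (G.neighborSet v).Nonempty) (hft : HasNoFalseTwins G) :
    gammaOLD G ≤ 2 * gammaLD G := by
  obtain ⟨C, hC, hcard⟩ := exists_isLDCode_ncard_eq_gammaLD G
  obtain ⟨D, _, hD, hDC⟩ := hC.exists_isOLDCode_superset hiso hft
  have hncard : D.ncard ≤ 2 * C.ncard := by
    rw [← D.toFinite.cast_ncard_eq, ← C.toFinite.cast_ncard_eq] at hDC
    exact_mod_cast hDC
  calc gammaOLD G ≤ D.ncard := hD.gammaOLD_le_ncard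
    _ ≤ 2 * C.ncard := hncard
    _ = 2 * gammaLD G := by rw [hcard]
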